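/- arXiv:2508.01141 — 2 statements merged into one kernel-verified Lean document; each statement's English description precedes it below -/
import Mathlib

section
/- Unconditional energy dissipation of the first-order structure-preserving IVS scheme (Theorem 3.2): let τ, M, λ, ν, ε, δ₀ > 0, β ≥ 0, and γⁿ, Rⁿ, R^{n+1} ∈ ℝ. Let φⁿ, φ^{n+1}, μⁿ, μ^{n+1}, pⁿ, p^{n+1} : ℝ^d → ℝ and uⁿ, û^{n+1}, u^{n+1} : ℝ^d → ℝ^d all be C². Assume E₁(φⁿ) + δ₀ > 0 and set ξ^{n+1} = R^{n+1}/√(E₁(φⁿ) + δ₀). Assume, pointwise on Ω: (i) (φ^{n+1} − φⁿ)/τ + ξ^{n+1}∇·(uⁿφⁿ) = MΔμ^{n+1}; (ii) μ^{n+1} = −λΔφ^{n+1} + λβφ^{n+1} + λξ^{n+1}F′(φⁿ); (iii) (û^{n+1} − uⁿ)/τ + ξ^{n+1} uⁿ·∇uⁿ − νΔû^{n+1} = −ξ^{n+1}(φⁿ∇μⁿ + γⁿ∇pⁿ); (iv) (u^{n+1} − û^{n+1})/τ − νΔ(u^{n+1} − û^{n+1}) + ∇p^{n+1} = γⁿ∇pⁿ;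 (v) ∇·u^{n+1} = 0; together with the boundary conditions ∂ₙφ^{n+1} = ∂ₙμ^{n+1} = 0 on ∂Ω and û^{n+1} = u^{n+1} = 0 on ∂Ω, and the scalar relation (R^{n+1} − Rⁿ)/τ = [λ(F′(φⁿ), (φ^{n+1} − φⁿ)/τ) + (μ^{n+1}, ∇·(uⁿφⁿ)) + (û^{n+1}, φⁿ∇μⁿ) + b(uⁿ, uⁿ, û^{n+1}) + γⁿ(∇pⁿ, û^{n+1})] / (2λ√(E₁(φⁿ) + δ₀)). Define Eⁿ = ½‖uⁿ‖² + (λ/2)‖∇φⁿ‖² + (λβ/2)‖φⁿ‖² + λ(Rⁿ)² and E^{n+1} = ½‖u^{n+1}‖² + (λ/2)‖∇φ^{n+1}‖² + (λβ/2)‖φ^{n+1}‖² + λ(R^{n+1})². Then E^{n+1} − Eⁿ ≤ −Mτ‖∇μ^{n+1}‖² − (ντ/2)(‖∇û^{n+1}‖² + ‖∇u^{n+1}‖²). -/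
open MeasureTheory Finset

noncomputable section

/-- Partial derivative of `f` in coordinate direction `i`. -/
def pd {d : ℕ} (i : Fin d) (f : (Fin d → ℝ) → ℝ) (x : Fin d → ℝ) : ℝ :=
  fderiv ℝ f x (Pi.single i 1)

/-- Divergence of a vector field. -/
def vdiv {d : ℕ} (u : (Fin d → ℝ) → Fin d → ℝ) (x : Fin d → ℝ) : ℝ :=
  ∑ i, pd i (fun y => u y i) x

/-- Laplacian. -/
def lap {d : ℕ} (f : (Fin d → ℝ) → ℝ) (x : Fin d → ℝ) : ℝ :=
  ∑ i, pd i (pd i f) x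

/-- Convection term `(u·∇)v`, component `i`. -/
def convect {d : ℕ} (u v : (Fin d → ℝ) → Fin d → ℝ) (x : Fin d → ℝ) (i : Fin d) : ℝ :=
  ∑ j, u x j * pd j (fun y => v y i) x

/-- Trilinear form `b(u,v,w) = ∫_Ω (u·∇v)·w dx`. -/
def trib {d : ℕ} (Ω : Set (Fin d → ℝ)) (u v w : (Fin d → ℝ) → Fin d → ℝ) : ℝ :=
  ∫ x in Ω, ∑ i, convect u v x i * w x i

/-- Homogeneous Neumann boundary condition on the box `[a,b]`. -/
def neumannBC {d : ℕ} (a b : Fin d → ℝ) (f : (Fin d → ℝ) → ℝ) : Prop :=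
  ∀ i : Fin d, ∀ x ∈ Set.Icc a b, (x i = a i ∨ x i = b i) → pd i f x = 0

/-- `F(s) = G(s) - (β/2)s²` with `G(s) = (1-s²)²/(4ε²)` the Ginzburg–Landau potential. -/
def Ffun (ε β s : ℝ) : ℝ := (1 - s^2)^2 / (4 * ε^2) - (β / 2) * s^2

/-- `F′(s) = (s³ - s)/ε² - βs`. -/
def Fprime (ε β s : ℝ) : ℝ := (s^3 - s) / ε^2 - β * s

/-- `E₁(φ) = ∫_Ω F(φ) dx`. -/
def E1 {d : ℕ} (Ω : Set (Fin d → ℝ)) (ε β : ℝ) (φ : (Fin d → ℝ) → ℝ) : ℝ :=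
  ∫ x in Ω, Ffun ε β (φ x)


/-- `f` is integrable on `Ω` with integral `v`. -/
def HI {d : ℕ} (Ω : Set (Fin d → ℝ)) (f : (Fin d → ℝ) → ℝ) (v : ℝ) : Prop :=
  IntegrableOn f Ω ∧ ∫ x in Ω, f x = v

theorem HI.add {d : ℕ} {Ω : Set (Fin d → ℝ)} {f g : (Fin d → ℝ) → ℝ} {v w : ℝ}
    (hf : HI Ω f v) (hg : HI Ω g w) : HI Ω (fun x => f x + g x) (v + w) :=
  ⟨hf.1.add hg.1, by rw [integral_add hf.1 hg.1, hf.2, hg.2]⟩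

theorem HI.sub {d : ℕ} {Ω : Set (Fin d → ℝ)} {f g : (Fin d → ℝ) → ℝ} {v w : ℝ}
    (hf : HI Ω f v) (hg : HI Ω g w) : HI Ω (fun x => f x - g x) (v - w) :=
  ⟨hf.1.sub hg.1, by rw [integral_sub hf.1 hg.1, hf.2, hg.2]⟩

theorem HI.cmul {d : ℕ} {Ω : Set (Fin d → ℝ)} {f : (Fin d → ℝ) → ℝ} {v : ℝ}
    (hf : HI Ω f v) (c : ℝ) : HI Ω (fun x => c * f x) (c * v) :=
  ⟨hf.1.const_mul c, by rw [integral_const_mul, hf.2]⟩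

theorem HI.sum {d : ℕ} {Ω : Set (Fin d → ℝ)} {f : Fin d → (Fin d → ℝ) → ℝ} {v : Fin d → ℝ}
    (hf : ∀ i, HI Ω (f i) (v i)) : HI Ω (fun x => ∑ i, f i x) (∑ i, v i) :=
  ⟨integrable_finsetSum _ fun i _ => (hf i).1, by
    rw [integral_finsetSum _ fun i _ => (hf i).1]
    exact Finset.sum_congr rfl fun i _ => (hf i).2⟩

theorem HI.of_cont {d : ℕ} {a b : Fin d → ℝ} {f : (Fin d → ℝ) → ℝ}
    (hf : Continuous f) : HI (Set.Icc a b) f (∫ x in Set.Icc a b, f x) :=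
  ⟨hf.continuousOn.integrableOn_compact isCompact_Icc, rfl⟩

theorem HI.mono {d : ℕ} {a b : Fin d → ℝ} {f g : (Fin d → ℝ) → ℝ} {v w : ℝ}
    (hf : HI (Set.Icc a b) f v) (hg : HI (Set.Icc a b) g w)
    (h : ∀ x ∈ Set.Icc a b, f x ≤ g x) : v ≤ w := by
  rw [← hf.2, ← hg.2]
  exact setIntegral_mono_on hf.1 hg.1 measurableSet_Icc h

theorem pd_cont {d : ℕ} (i : Fin d) {f : (Fin d → ℝ) → ℝ} (hf : ContDiff ℝ 1 f) :
    Continuous (pd i f) := by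
  unfold pd
  exact (hf.continuous_fderiv (by norm_num)).clm_apply continuous_const

theorem pd_C1 {d : ℕ} (i : Fin d) {f : (Fin d → ℝ) → ℝ} (hf : ContDiff ℝ 2 f) :
    ContDiff ℝ 1 (pd i f) := by
  unfold pd
  exact (hf.fderiv_right (m := 1) (by norm_num)).clm_apply contDiff_const

theorem lap_cont {d : ℕ} {f : (Fin d → ℝ) → ℝ} (hf : ContDiff ℝ 2 f) :
    Continuous (lap f) := by
  unfold lap
  exact continuous_finsetSum _ fun i _ => pd_cont i (pd_C1 i hf)

theorem pd_mul {d : ℕ} (i : Fin d) {f g : (Fin d → ℝ) → ℝ} (hf : ContDiff ℝ 1 f)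
    (hg : ContDiff ℝ 1 g) (x : Fin d → ℝ) :
    pd i (fun y => f y * g y) x = pd i f x * g x + f x * pd i g x := by
  unfold pd
  rw [fderiv_fun_mul (hf.differentiable (by norm_num) x) (hg.differentiable (by norm_num) x)]
  simp
  ring

theorem pd_sub {d : ℕ} (i : Fin d) {f g : (Fin d → ℝ) → ℝ} (hf : ContDiff ℝ 1 f)
    (hg : ContDiff ℝ 1 g) (x : Fin d → ℝ) :
    pd i (fun y => f y - g y) x = pd i f x - pd i g x := by
  unfold pd
  rw [fderiv_fun_sub (hf.differentiable (by norm_num) x) (hg.differentiable (by norm_num) x)]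
  simp

theorem frontier_face {d : ℕ} {a b : Fin d → ℝ} (i : Fin d)
    {x : Fin d → ℝ} (hx : x ∈ Set.Icc a b) (h : x i = a i ∨ x i = b i) :
    x ∈ frontier (Set.Icc a b) := by
  refine ⟨subset_closure hx, fun hi => ?_⟩
  rw [← Set.pi_univ_Icc, interior_pi_set Set.finite_univ] at hi
  have := hi i (Set.mem_univ i)
  simp only [interior_Icc] at this
  rcases h with h | h
  · exact absurd this.1 (by simp [h])
  · exact absurd this.2 (by simp [h])

/-- Divergence theorem for a field with vanishing normal component. -/
theorem vdiv_zero {d : ℕ} (hd : 1 ≤ d) {a b : Fin d → ℝ} (hab : ∀ i, a i < b i)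
    (h : Fin d → (Fin d → ℝ) → ℝ) (hh : ∀ i, ContDiff ℝ 1 (h i))
    (hbc : ∀ i, ∀ x ∈ Set.Icc a b, (x i = a i ∨ x i = b i) → h i x = 0) :
    HI (Set.Icc a b) (fun x => ∑ i, pd i (h i) x) 0 := by
  obtain ⟨n, rfl⟩ : ∃ n, d = n + 1 := ⟨d - 1, by omega⟩
  have hc : Continuous (fun x => ∑ i, pd i (h i) x) :=
    continuous_finsetSum _ fun i _ => pd_cont i (hh i)
  refine ⟨(HI.of_cont hc).1, ?_⟩
  have key := integral_divergence_of_hasFDerivAt_off_countable' a b (fun i => (hab i).le)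
    h (fun i => fderiv ℝ (h i)) ∅ Set.countable_empty
    (fun i => (hh i).continuous.continuousOn)
    (fun x _ i => ((hh i).differentiable (by norm_num) x).hasFDerivAt)
    (HI.of_cont hc).1
  unfold pd
  rw [key]
  refine Finset.sum_eq_zero fun i _ => ?_
  have mem : ∀ c, a i ≤ c → c ≤ b i → ∀ y ∈ Set.Icc (a ∘ i.succAbove) (b ∘ i.succAbove),
      i.insertNth c y ∈ Set.Icc a b := by
    intro c h1 h2 y hy
    rw [Fin.insertNth_mem_Icc]
    exact ⟨⟨h1, h2⟩, hy⟩
  rw [setIntegral_eq_zero_of_forall_eq_zero, setIntegral_eq_zero_of_forall_eq_zero]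
  · simp
  · intro y hy
    exact hbc i _ (mem _ le_rfl (hab i).le y hy) (by simp)
  · intro y hy
    exact hbc i _ (mem _ (hab i).le le_rfl y hy) (by simp)

theorem green {d : ℕ} (hd : 1 ≤ d) {a b : Fin d → ℝ} (hab : ∀ i, a i < b i)
    {f g : (Fin d → ℝ) → ℝ} (hf : ContDiff ℝ 1 f) (hg : ContDiff ℝ 2 g)
    (hbc : ∀ i, ∀ x ∈ Set.Icc a b, (x i = a i ∨ x i = b i) → f x = 0 ∨ pd i g x = 0) :
    HI (Set.Icc a b) (fun x => (∑ i, pd i f x * pd i g x) + f x * lap g x) 0 := by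
  have := vdiv_zero hd hab (fun i x => f x * pd i g x) (fun i => hf.mul (pd_C1 i hg))
    (fun i x hx h => by simpa using hbc i x hx h)
  convert this using 2 with x
  unfold lap
  rw [Finset.mul_sum, ← Finset.sum_add_distrib]
  exact Finset.sum_congr rfl fun i _ => (pd_mul i hf (pd_C1 i hg) x).symm

theorem greenp {d : ℕ} (hd : 1 ≤ d) {a b : Fin d → ℝ} (hab : ∀ i, a i < b i)
    {p : (Fin d → ℝ) → ℝ} {u : (Fin d → ℝ) → Fin d → ℝ} (hp : ContDiff ℝ 1 p)
    (hu : ContDiff ℝ 1 u)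
    (hbc : ∀ x ∈ frontier (Set.Icc a b), u x = 0) :
    HI (Set.Icc a b) (fun x => (∑ i, pd i p x * u x i) + p x * vdiv u x) 0 := by
  have hu' := contDiff_pi.1 hu
  have := vdiv_zero hd hab (fun i x => p x * u x i) (fun i => hp.mul (hu' i))
    (fun i x hx h => by simp [hbc x (frontier_face i hx h)])
  convert this using 2 with x
  unfold vdiv
  rw [Finset.mul_sum, ← Finset.sum_add_distrib]
  exact Finset.sum_congr rfl fun i _ => (pd_mul i hp (hu' i) x).symm

theorem stmt1 (d : ℕ) (hd : 1 ≤ d) (a b : Fin d → ℝ) (hab : ∀ i, a i < b i)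
    (Ω : Set (Fin d → ℝ)) (hΩ : Ω = Set.Icc a b)
    (τ M lam ν ε δ₀ β : ℝ)
    (hτ : 0 < τ) (hM : 0 < M) (hlam : 0 < lam) (hν : 0 < ν) (hε : 0 < ε)
    (hδ₀ : 0 < δ₀) (hβ : 0 ≤ β)
    (γn Rn Rn1 ξ : ℝ)
    (φn φn1 μn μn1 pn pn1 : (Fin d → ℝ) → ℝ)
    (un uhat1 un1 : (Fin d → ℝ) → Fin d → ℝ)
    (hφn : ContDiff ℝ 2 φn) (hφn1 : ContDiff ℝ 2 φn1)
    (hμn : ContDiff ℝ 2 μn) (hμn1 : ContDiff ℝ 2 μn1)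
    (hpn : ContDiff ℝ 2 pn) (hpn1 : ContDiff ℝ 2 pn1)
    (hun : ContDiff ℝ 2 un) (huhat1 : ContDiff ℝ 2 uhat1) (hun1 : ContDiff ℝ 2 un1)
    (hE1pos : 0 < E1 Ω ε β φn + δ₀)
    (hξ : ξ = Rn1 / Real.sqrt (E1 Ω ε β φn + δ₀))
    -- (i) discrete Cahn–Hilliard equation
    (heq1 : ∀ x ∈ Ω,
      (φn1 x - φn x) / τ + ξ * vdiv (fun y i => un y i * φn y) x = M * lap μn1 x)
    -- (ii) chemical potential
    (heq2 : ∀ x ∈ Ω,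
      μn1 x = -lam * lap φn1 x + lam * β * φn1 x + lam * ξ * Fprime ε β (φn x))
    -- (iii) intermediate velocity
    (heq3 : ∀ x ∈ Ω, ∀ i : Fin d,
      (uhat1 x i - un x i) / τ + ξ * convect un un x i - ν * lap (fun y => uhat1 y i) x
        = -ξ * (φn x * pd i μn x + γn * pd i pn x))
    -- (iv) correction step
    (heq4 : ∀ x ∈ Ω, ∀ i : Fin d,
      (un1 x i - uhat1 x i) / τ - ν * lap (fun y => un1 y i - uhat1 y i) x + pd i pn1 x
        = γn * pd i pn x)
    -- (v) incompressibility
    (heq5 : ∀ x ∈ Ω, vdiv un1 x = 0)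
    -- boundary conditions
    (hφbc : neumannBC a b φn1) (hμbc : neumannBC a b μn1)
    (huhatbc : ∀ x ∈ frontier Ω, uhat1 x = 0) (hubc : ∀ x ∈ frontier Ω, un1 x = 0)
    -- scalar auxiliary-variable relation
    (heqR : (Rn1 - Rn) / τ =
      (lam * (∫ x in Ω, Fprime ε β (φn x) * ((φn1 x - φn x) / τ))
        + (∫ x in Ω, μn1 x * vdiv (fun y i => un y i * φn y) x)
        + (∫ x in Ω, ∑ i, uhat1 x i * (φn x * pd i μn x))
        + trib Ω un un uhat1
        + γn * (∫ x in Ω, ∑ i, pd i pn x * uhat1 x i))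
      / (2 * lam * Real.sqrt (E1 Ω ε β φn + δ₀))) :
    -- discrete modified energy dissipation law
    ((1/2) * (∫ x in Ω, ∑ i, (un1 x i)^2)
      + (lam/2) * (∫ x in Ω, ∑ i, (pd i φn1 x)^2)
      + (lam * β / 2) * (∫ x in Ω, (φn1 x)^2) + lam * Rn1^2)
    - ((1/2) * (∫ x in Ω, ∑ i, (un x i)^2)
      + (lam/2) * (∫ x in Ω, ∑ i, (pd i φn x)^2)
      + (lam * β / 2) * (∫ x in Ω, (φn x)^2) + lam * Rn^2)
    ≤ -(M * τ) * (∫ x in Ω, ∑ i, (pd i μn1 x)^2)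
      - (ν * τ / 2) * ((∫ x in Ω, ∑ i, ∑ j, (pd j (fun y => uhat1 y i) x)^2)
        + (∫ x in Ω, ∑ i, ∑ j, (pd j (fun y => un1 y i) x)^2)) := by
  subst hΩ
  have two1 : (1 : WithTop ℕ∞) ≤ 2 := by norm_num
  have cun := contDiff_pi.1 hun
  have cuh := contDiff_pi.1 huhat1
  have cu1 := contDiff_pi.1 hun1
  have P : ∀ (i : Fin d) {f : (Fin d → ℝ) → ℝ}, ContDiff ℝ 2 f → Continuous (pd i f) :=
    fun i f hf => pd_cont i (hf.of_le two1)
  have kφn := hφn.continuous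
  have kφn1 := hφn1.continuous
  have kμn1 := hμn1.continuous
  have kun := fun i => (cun i).continuous
  have kuh := fun i => (cuh i).continuous
  have ku1 := fun i => (cu1 i).continuous
  have pφn := fun i => P i hφn
  have pφn1 := fun i => P i hφn1
  have pμn := fun i => P i hμn
  have pμn1 := fun i => P i hμn1
  have ppn := fun i => P i hpn
  have pun := fun k i => P i (cun k)
  have puh := fun k i => P i (cuh k)
  have pu1 := fun k i => P i (cu1 k)
  have kdiv : Continuous (vdiv (fun y i => un y i * φn y)) := by
    unfold vdiv
    exact continuous_finsetSum _ fun i _ => P i ((cun i).mul hφn)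
  have kF : Continuous (fun x => Fprime ε β (φn x)) := by
    unfold Fprime
    fun_prop
  -- basic integrals
  have I1 : HI (Set.Icc a b) (fun x => ∑ i, (un1 x i)^2) _ := HI.of_cont (by fun_prop)
  have I2 : HI (Set.Icc a b) (fun x => ∑ i, (pd i φn1 x)^2) _ := HI.of_cont (by fun_prop)
  have I3 : HI (Set.Icc a b) (fun x => (φn1 x)^2) _ := HI.of_cont (by fun_prop)
  have I4 : HI (Set.Icc a b) (fun x => ∑ i, (un x i)^2) _ := HI.of_cont (by fun_prop)
  have I5 : HI (Set.Icc a b) (fun x => ∑ i, (pd i φn x)^2) _ := HI.of_cont (by fun_prop)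
  have I6 : HI (Set.Icc a b) (fun x => (φn x)^2) _ := HI.of_cont (by fun_prop)
  have I7 : HI (Set.Icc a b) (fun x => ∑ i, (pd i μn1 x)^2) _ := HI.of_cont (by fun_prop)
  have I8 : HI (Set.Icc a b) (fun x => ∑ i, ∑ j, (pd j (fun y => uhat1 y i) x)^2) _ :=
    HI.of_cont (by fun_prop)
  have I9 : HI (Set.Icc a b) (fun x => ∑ i, ∑ j, (pd j (fun y => un1 y i) x)^2) _ :=
    HI.of_cont (by fun_prop)
  have J1 : HI (Set.Icc a b) (fun x => Fprime ε β (φn x) * ((φn1 x - φn x) / τ)) _ :=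
    HI.of_cont (by fun_prop)
  have J2 : HI (Set.Icc a b) (fun x => μn1 x * vdiv (fun y i => un y i * φn y) x) _ :=
    HI.of_cont (by fun_prop)
  have J3 : HI (Set.Icc a b) (fun x => ∑ i, uhat1 x i * (φn x * pd i μn x)) _ :=
    HI.of_cont (by fun_prop)
  have J4 : HI (Set.Icc a b) (fun x => ∑ i, convect un un x i * uhat1 x i)
      (trib (Set.Icc a b) un un uhat1) :=
    HI.of_cont (by unfold convect; fun_prop)
  have J5 : HI (Set.Icc a b) (fun x => ∑ i, pd i pn x * uhat1 x i) _ :=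
    HI.of_cont (by fun_prop)
  -- integrations by parts
  have Z1 := green hd hab (hμn1.of_le two1) hμn1 (fun i x hx h => Or.inr (hμbc i x hx h))
  have Z2 := green hd hab ((hφn1.sub hφn).of_le two1) hφn1
    (fun i x hx h => Or.inr (hφbc i x hx h))
  have Z3 := HI.sum fun k => green hd hab ((cuh k).of_le two1) (cuh k)
    (fun i x hx h => Or.inl (by simp [huhatbc x (frontier_face i hx h)]))
  have Z4 := HI.sum fun k => green hd hab ((cu1 k).of_le two1) ((cu1 k).sub (cuh k))
    (fun i x hx h => Or.inl (by simp [hubc x (frontier_face i hx h)]))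
  have Z5 := greenp hd hab (hpn1.of_le two1) (hun1.of_le two1) hubc
  have Z6 := greenp hd hab (hpn.of_le two1) (hun1.of_le two1) hubc
  have HL := ((((((I1.cmul (1/2)).add (I2.cmul (lam/2))).add (I3.cmul (lam * β / 2))).sub
    (((I4.cmul (1/2)).add (I5.cmul (lam/2))).add (I6.cmul (lam * β / 2)))).add
    ((I7.cmul (M * τ)).add ((I8.add I9).cmul (ν * τ / 2)))).add
    (((((J1.cmul lam).add J2).add J3).add (J4.add (J5.cmul γn))).cmul (ξ * τ)))
  have HR := ((((Z1.cmul (M * τ)).add (Z2.cmul lam)).add ((Z3.add Z4).cmul (ν * τ))).sub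
    (Z5.cmul τ)).add (Z6.cmul (γn * τ))
  have main := HL.mono HR ?_
  · simp only [Finset.sum_const_zero, mul_zero, add_zero, sub_zero] at main
    have hs : 0 < Real.sqrt (E1 (Set.Icc a b) ε β φn + δ₀) := Real.sqrt_pos.2 hE1pos
    generalize Real.sqrt (E1 (Set.Icc a b) ε β φn + δ₀) = s at *
    have hR2 : lam * Rn1^2 - lam * Rn^2 ≤ 2 * lam * Rn1 * (Rn1 - Rn) := by
      nlinarith [mul_nonneg hlam.le (sq_nonneg (Rn1 - Rn))]
    have hR3 : 2 * lam * Rn1 * (Rn1 - Rn) = ξ * τ * (2 * lam * s * ((Rn1 - Rn) / τ)) := by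
      rw [hξ]; field_simp
    rw [heqR, mul_div_cancel₀ _ (by positivity)] at hR3
    linarith
  · intro x hx
    have e1 := heq1 x hx
    have e2 := heq2 x hx
    have e5 := heq5 x hx
    have hv : ∀ k, (1/2) * (un1 x k)^2 - (1/2) * (un x k)^2
        + (ν * τ / 2) * ((∑ j, (pd j (fun y => uhat1 y k) x)^2)
          + ∑ j, (pd j (fun y => un1 y k) x)^2)
        + (ξ * τ) * (uhat1 x k * (φn x * pd k μn x) + (convect un un x k * uhat1 x k
          + γn * (pd k pn x * uhat1 x k)))
        ≤ (ν * τ) * (((∑ i, pd i (fun y => uhat1 y k) x * pd i (fun y => uhat1 y k) x)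
            + uhat1 x k * lap (fun y => uhat1 y k) x)
          + ((∑ i, pd i (fun y => un1 y k) x * pd i (fun y => un1 y k - uhat1 y k) x)
            + un1 x k * lap (fun y => un1 y k - uhat1 y k) x))
          - τ * (pd k pn1 x * un1 x k) + (γn * τ) * (pd k pn x * un1 x k) := by
      intro k
      have e3 := heq3 x hx k
      have e4 := heq4 x hx k
      have hs : (1/2) * ((∑ j, (pd j (fun y => uhat1 y k) x)^2)
          + ∑ j, (pd j (fun y => un1 y k) x)^2)
          ≤ (∑ i, pd i (fun y => uhat1 y k) x * pd i (fun y => uhat1 y k) x)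
          + ∑ i, pd i (fun y => un1 y k) x * pd i (fun y => un1 y k - uhat1 y k) x := by
        rw [← Finset.sum_add_distrib, ← Finset.sum_add_distrib, Finset.mul_sum]
        refine Finset.sum_le_sum fun i _ => ?_
        rw [pd_sub i ((cu1 k).of_le two1) ((cuh k).of_le two1)]
        nlinarith [sq_nonneg (pd i (fun y => un1 y k) x - pd i (fun y => uhat1 y k) x)]
      have hs' := mul_le_mul_of_nonneg_left hs (mul_pos hν hτ).le
      have e3' : ν * τ * lap (fun y => uhat1 y k) x = (uhat1 x k - un x k)
          + τ * ξ * convect un un x k + τ * ξ * (φn x * pd k μn x + γn * pd k pn x) := by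
        field_simp at e3
        linarith
      have e4' : ν * τ * lap (fun y => un1 y k - uhat1 y k) x = (un1 x k - uhat1 x k)
          + τ * pd k pn1 x - τ * γn * pd k pn x := by
        field_simp at e4
        linarith
      have e3u := congrArg (fun z => uhat1 x k * z) e3'
      have e4u := congrArg (fun z => un1 x k * z) e4'
      nlinarith [sq_nonneg (uhat1 x k - un x k), sq_nonneg (un1 x k - uhat1 x k)]
    have hV := Finset.sum_le_sum fun k (_ : k ∈ Finset.univ) => hv k
    simp only [Finset.sum_add_distrib, Finset.sum_sub_distrib, ← Finset.mul_sum] at hV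
    have hG : (1/2) * (∑ i, (pd i φn1 x)^2) - (1/2) * (∑ i, (pd i φn x)^2) ≤
        ∑ i, pd i (fun y => φn1 y - φn y) x * pd i φn1 x := by
      rw [Finset.mul_sum, Finset.mul_sum, ← Finset.sum_sub_distrib]
      refine Finset.sum_le_sum fun i _ => ?_
      rw [pd_sub i (hφn1.of_le two1) (hφn.of_le two1)]
      nlinarith [sq_nonneg (pd i φn1 x - pd i φn x)]
    have hG' := mul_le_mul_of_nonneg_left hG hlam.le
    have e1' : M * τ * lap μn1 x = (φn1 x - φn x)
        + τ * ξ * vdiv (fun y i => un y i * φn y) x := by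
      field_simp at e1
      linarith
    have e1u := congrArg (fun z => μn1 x * z) e1'
    have e2u := congrArg (fun z => (φn1 x - φn x) * z) e2
    have hsq := mul_nonneg (mul_nonneg hlam.le hβ) (sq_nonneg (φn1 x - φn x))
    have hJ : ξ * τ * (lam * (Fprime ε β (φn x) * ((φn1 x - φn x) / τ)))
        = ξ * lam * Fprime ε β (φn x) * (φn1 x - φn x) := by
      field_simp
    have hM2 : ∑ i, pd i μn1 x * pd i μn1 x = ∑ i, (pd i μn1 x)^2 :=
      Finset.sum_congr rfl fun i _ => by ring
    simp only [e5, mul_zero, add_zero, Finset.sum_add_distrib]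
    rw [hM2]
    linarith
end
end

section
/- Discrete mass conservation for the second-order (BDF2) structure-preserving IVS scheme (Theorem 3.3, first part): let M, τ > 0, N ≥ 1, and ξ², …, ξᴺ ∈ ℝ. Let φ⁰, φ¹, …, φᴺ, μ², …, μᴺ : ℝ^d → ℝ be C² and u⁰, …, u^{N−1} : ℝ^d → ℝ^d be C¹ with u^k = 0 on ∂Ω for all k. Assume ∫_Ω φ¹ dx = ∫_Ω φ⁰ dx and that for every 1 ≤ n ≤ N−1, pointwise on Ω, (3φ^{n+1} − 4φⁿ + φ^{n−1})/(2τ) + ξ^{n+1}∇·((2uⁿ − u^{n−1})(2φⁿ − φ^{n−1})) = MΔμ^{n+1}, with ∂ₙμ^{n+1} = 0 on ∂Ω. Then ∫_Ω φⁿ dx = ∫_Ω φ⁰ dx for every 0 ≤ n ≤ N. -/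
open MeasureTheory Finset

noncomputable section

theorem vdiv_cont {d : ℕ} (v : (Fin d → ℝ) → Fin d → ℝ)
    (hv : ∀ i, ContDiff ℝ 1 (fun y => v y i)) : Continuous (vdiv v) := by
  unfold vdiv pd
  refine continuous_finsetSum _ fun i _ => ?_
  exact ((hv i).continuous_fderiv (by norm_num)).clm_apply continuous_const

theorem int_vdiv {d : ℕ} (hd : 1 ≤ d) (a b : Fin d → ℝ) (hab : ∀ i, a i < b i)
    (v : (Fin d → ℝ) → Fin d → ℝ)
    (hv : ∀ i, ContDiff ℝ 1 (fun y => v y i))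
    (hbc : ∀ i : Fin d, ∀ x ∈ Set.Icc a b, (x i = a i ∨ x i = b i) → v x i = 0) :
    ∫ x in Set.Icc a b, vdiv v x = 0 := by
  obtain ⟨n, rfl⟩ : ∃ n, d = n + 1 := ⟨d - 1, by omega⟩
  have hle : a ≤ b := fun i => (hab i).le
  have key := integral_divergence_of_hasFDerivAt_off_countable' a b hle
    (fun i y => v y i) (fun i y => fderiv ℝ (fun y => v y i) y) ∅ Set.countable_empty
    (fun i => (hv i).continuous.continuousOn)
    (fun x _ i => ((hv i).differentiable (by norm_num) x).hasFDerivAt)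
    ((vdiv_cont v hv).continuousOn.integrableOn_compact isCompact_Icc)
  refine Eq.trans key ?_
  have hmem : ∀ (i : Fin (n+1)) (c : ℝ), a i ≤ c → c ≤ b i →
      ∀ x ∈ Set.Icc (a ∘ i.succAbove) (b ∘ i.succAbove),
        (i.insertNth c x : Fin (n+1) → ℝ) ∈ Set.Icc a b := by
    intro i c h1 h2 x hx
    rw [Fin.insertNth_mem_Icc]
    exact ⟨⟨h1, h2⟩, hx⟩
  refine Finset.sum_eq_zero fun i _ => ?_
  rw [setIntegral_eq_zero_of_forall_eq_zero, setIntegral_eq_zero_of_forall_eq_zero, sub_zero]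
  · intro x hx
    exact hbc i _ (hmem i _ le_rfl (hle i) x hx) (by simp)
  · intro x hx
    exact hbc i _ (hmem i _ (hle i) le_rfl x hx) (by simp)

theorem face_frontier {d : ℕ} (a b : Fin d → ℝ) (i : Fin d) (x : Fin d → ℝ)
    (hx : x ∈ Set.Icc a b) (h : x i = a i ∨ x i = b i) : x ∈ frontier (Set.Icc a b) := by
  rw [isClosed_Icc.frontier_eq]
  refine ⟨hx, fun hi => ?_⟩
  rw [← Set.pi_univ_Icc, interior_pi_set Set.finite_univ] at hi
  have : x i ∈ interior (Set.Icc (a i) (b i)) := hi i (Set.mem_univ i)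
  rw [interior_Icc] at this
  rcases h with h | h
  · exact absurd this.1 (by simp [h])
  · exact absurd this.2 (by simp [h])

/-- Discrete mass conservation for the second-order (BDF2) structure-preserving IVS
scheme (Theorem 3.3, first part). -/
theorem stmt2 (d : ℕ) (hd : 1 ≤ d) (a b : Fin d → ℝ) (hab : ∀ i, a i < b i)
    (M τ : ℝ) (hM : 0 < M) (hτ : 0 < τ) (N : ℕ) (hN : 1 ≤ N)
    (ξ : ℕ → ℝ)
    (φ μ : ℕ → (Fin d → ℝ) → ℝ) (u : ℕ → (Fin d → ℝ) → Fin d → ℝ)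
    (hφ : ∀ k ≤ N, ContDiff ℝ 2 (φ k))
    (hμ : ∀ k, 2 ≤ k → k ≤ N → ContDiff ℝ 2 (μ k))
    (hu : ∀ k ≤ N - 1, ContDiff ℝ 1 (u k))
    (hubc : ∀ k ≤ N - 1, ∀ x ∈ frontier (Set.Icc a b), u k x = 0)
    (h1 : ∫ x in Set.Icc a b, φ 1 x = ∫ x in Set.Icc a b, φ 0 x)
    (heq : ∀ n, 1 ≤ n → n ≤ N - 1 → ∀ x ∈ Set.Icc a b,
      (3 * φ (n+1) x - 4 * φ n x + φ (n-1) x) / (2 * τ)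
        + ξ (n+1) * vdiv (fun y i =>
            (2 * u n y i - u (n-1) y i) * (2 * φ n y - φ (n-1) y)) x
        = M * lap (μ (n+1)) x)
    (hμbc : ∀ n, 1 ≤ n → n ≤ N - 1 → neumannBC a b (μ (n+1))) :
    ∀ n ≤ N, ∫ x in Set.Icc a b, φ n x = ∫ x in Set.Icc a b, φ 0 x := by
  have step : ∀ n, 1 ≤ n → n ≤ N - 1 →
      3 * (∫ x in Set.Icc a b, φ (n+1) x) - 4 * (∫ x in Set.Icc a b, φ n x)
        + (∫ x in Set.Icc a b, φ (n-1) x) = 0 := by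
    intro n hn1 hn
    have hint : ∀ f : (Fin d → ℝ) → ℝ, Continuous f → IntegrableOn f (Set.Icc a b) :=
      fun f hf => hf.continuousOn.integrableOn_compact isCompact_Icc
    have c1 := (hφ (n+1) (by omega)).continuous
    have c2 := (hφ n (by omega)).continuous
    have c3 := (hφ (n-1) (by omega)).continuous
    have hv : ∀ i, ContDiff ℝ 1 (fun y =>
        (2 * u n y i - u (n-1) y i) * (2 * φ n y - φ (n-1) y)) := by
      intro i
      have e1 := contDiff_pi.1 (hu n hn) i
      have e2 := contDiff_pi.1 (hu (n-1) (by omega)) i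
      have e3 : ContDiff ℝ 1 (φ n) := (hφ n (by omega)).of_le (by norm_num)
      have e4 : ContDiff ℝ 1 (φ (n-1)) := (hφ (n-1) (by omega)).of_le (by norm_num)
      exact ((contDiff_const.mul e1).sub e2).mul ((contDiff_const.mul e3).sub e4)
    have hw : ∀ i, ContDiff ℝ 1 (fun y => pd i (μ (n+1)) y) := by
      intro i
      exact ((hμ (n+1) (by omega) (by omega)).fderiv_right (m := 1) (by norm_num)).clm_apply
        contDiff_const
    have iv := int_vdiv hd a b hab (fun y i =>
        (2 * u n y i - u (n-1) y i) * (2 * φ n y - φ (n-1) y)) hv (by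
      intro i x hx h
      have hf := face_frontier a b i x hx h
      simp [hubc n hn x hf, hubc (n-1) (by omega) x hf])
    have iw := int_vdiv hd a b hab (fun y i => pd i (μ (n+1)) y) hw
      (fun i x hx h => hμbc n hn1 hn i x hx h)
    have cv := vdiv_cont _ hv
    have cw := vdiv_cont _ hw
    set V := vdiv (fun y i => (2 * u n y i - u (n-1) y i) * (2 * φ n y - φ (n-1) y)) with hV
    set W := vdiv (fun y i => pd i (μ (n+1)) y) with hW
    have e : ∫ x in Set.Icc a b, (3 * φ (n+1) x - 4 * φ n x + φ (n-1) x)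
        = ∫ x in Set.Icc a b, (2 * τ * M * W x - 2 * τ * ξ (n+1) * V x) := by
      refine setIntegral_congr_fun measurableSet_Icc fun x hx => ?_
      have h := heq n hn1 hn x hx
      have hl : lap (μ (n+1)) x = W x := rfl
      rw [hl] at h
      field_simp at h
      linarith
    rw [integral_sub (hint _ (by fun_prop)) (hint _ (by fun_prop)),
      integral_const_mul, integral_const_mul, iv, iw,
      integral_add (hint _ (by fun_prop)) (hint _ (by fun_prop)),
      integral_sub (hint _ (by fun_prop)) (hint _ (by fun_prop)),
      integral_const_mul, integral_const_mul] at e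
    linarith
  intro n
  induction n using Nat.strong_induction_on with
  | _ n ih =>
    intro hn
    rcases n with _ | _ | n
    · rfl
    · exact h1
    · have h := step (n+1) (by omega) (by omega)
      have i1 := ih (n+1) (by omega) (by omega)
      have i2 := ih n (by omega) (by omega)
      simp only [Nat.add_sub_cancel] at h
      linarith
end
end
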